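/- arXiv:2411.02172 — 2 statements merged into one kernel-verified Lean document; each statement's English description precedes it below -/
import Mathlib

section
/- Let G be a connected graph on n vertices. Every inclusion-maximal tubing of G contains exactly n − 1 tubes. -/
/-- A tube of a graph `G` is a nonempty proper subset of the vertices inducing a
connected subgraph. -/
def IsTube {V : Type*} [Fintype V] [DecidableEq V] (G : SimpleGraph V) (t : Finset V) : Prop :=
  t.Nonempty ∧ t ≠ Finset.univ ∧ (G.induce (t : Set V)).Connected

/-- Two tubes are compatible if they are nested or non-adjacent
(their union induces a disconnected subgraph). -/
def TubeCompat {V : Type*} [Fintype V] [DecidableEq V] (G : SimpleGraph V)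
    (t₁ t₂ : Finset V) : Prop :=
  t₁ ⊆ t₂ ∨ t₂ ⊆ t₁ ∨ ¬ (G.induce ((t₁ ∪ t₂ : Finset V) : Set V)).Connected

/-- A tubing is a set of pairwise compatible tubes. -/
def IsTubing {V : Type*} [Fintype V] [DecidableEq V] (G : SimpleGraph V)
    (T : Finset (Finset V)) : Prop :=
  (∀ t ∈ T, IsTube G t) ∧ (T : Set (Finset V)).Pairwise (TubeCompat G)

/-- An inclusion-maximal tubing. -/
def IsMaxTubing {V : Type*} [Fintype V] [DecidableEq V] (G : SimpleGraph V)
    (T : Finset (Finset V)) : Prop :=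
  IsTubing G T ∧ ∀ T', IsTubing G T' → T ⊆ T' → T' = T

/-- `x` lies in `U` but in no member of `T` strictly contained in `U`. -/
def IsResidual {V : Type*} (T : Finset (Finset V)) (U : Finset V) (x : V) : Prop :=
  x ∈ U ∧ ∀ t ∈ T, t ⊂ U → x ∉ t

section

variable {V : Type*} {G : SimpleGraph V}

lemma connected_induce_finset_union [DecidableEq V] {s t : Finset V}
    (hs : (G.induce (s : Set V)).Connected)
    (ht : (G.induce (t : Set V)).Connected) {x : V} (hxs : x ∈ s) (hxt : x ∈ t) :
    (G.induce ((s ∪ t : Finset V) : Set V)).Connected := by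
  rw [Finset.coe_union]
  exact SimpleGraph.induce_union_connected hs.preconnected ht.preconnected ⟨x, hxs, hxt⟩

lemma exists_adj_boundary_of_connected_induce {s t : Finset V}
    (ht : (G.induce (t : Set V)).Connected) (hs : s.Nonempty) (hst : s ⊂ t) :
    ∃ a ∈ s, ∃ b ∈ t, b ∉ s ∧ G.Adj a b := by
  obtain ⟨a, ha⟩ := hs
  obtain ⟨b, hb, hbs⟩ := Finset.exists_of_ssubset hst
  obtain ⟨p⟩ := ht.preconnected ⟨a, hst.subset ha⟩ ⟨b, hb⟩
  obtain ⟨d, -, hd₁, hd₂⟩ := p.exists_boundary_dart {v | (v : V) ∈ s} ha hbs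
  exact ⟨d.fst, hd₁, d.snd, d.snd.2, hd₂, d.adj⟩

lemma exists_maximal_connected_induce [Fintype V] {s : Finset V} {y : V} (hy : y ∈ s) :
    ∃ C, Maximal (fun C : Finset V => C ⊆ s ∧ y ∈ C ∧ (G.induce (C : Set V)).Connected) C := by
  refine Set.Finite.exists_maximal (Set.toFinite
    {C : Finset V | C ⊆ s ∧ y ∈ C ∧ (G.induce (C : Set V)).Connected})
    ⟨{y}, Finset.singleton_subset_iff.2 hy, Finset.mem_singleton_self y, ?_⟩
  rw [Finset.coe_singleton]
  exact ⟨SimpleGraph.Preconnected.of_subsingleton⟩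

variable [Fintype V] [DecidableEq V]

/-- In a tubing, extended by the whole vertex set, members sharing a vertex are nested. -/
lemma IsTubing.subset_or_subset {T : Finset (Finset V)} (hT : IsTubing G T) {s t : Finset V}
    (hs : s ∈ insert Finset.univ T) (ht : t ∈ insert Finset.univ T) {x : V}
    (hxs : x ∈ s) (hxt : x ∈ t) : s ⊆ t ∨ t ⊆ s := by
  rcases Finset.mem_insert.1 hs with rfl | hs
  · exact Or.inr (Finset.subset_univ _)
  rcases Finset.mem_insert.1 ht with rfl | ht
  · exact Or.inl (Finset.subset_univ _)
  rcases eq_or_ne s t with rfl | hne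
  · exact Or.inl subset_rfl
  rcases hT.2 hs ht hne with h | h | h
  · exact Or.inl h
  · exact Or.inr h
  · exact absurd (connected_induce_finset_union (hT.1 s hs).2.2 (hT.1 t ht).2.2 hxs hxt) h

lemma IsTubing.exists_isResidual {T : Finset (Finset V)} (hT : IsTubing G T) {U : Finset V}
    (hU : (G.induce (U : Set V)).Connected) : ∃ x, IsResidual T U x := by
  by_contra! hcov
  have hcov' : ∀ x ∈ U, ∃ t ∈ T, t ⊂ U ∧ x ∈ t := by
    intro x hx
    by_contra! h
    exact hcov x ⟨hx, h⟩
  obtain ⟨⟨x, hx⟩⟩ := hU.nonempty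
  obtain ⟨t₀, ht₀, ht₀U, -⟩ := hcov' x hx
  obtain ⟨t, ht⟩ := (T.filter (· ⊂ U)).exists_maximal ⟨t₀, Finset.mem_filter.2 ⟨ht₀, ht₀U⟩⟩
  obtain ⟨htT, htU⟩ := Finset.mem_filter.1 ht.prop
  obtain ⟨a, ha, b, hb, hbt, hab⟩ :=
    exists_adj_boundary_of_connected_induce hU (hT.1 t htT).1 htU
  obtain ⟨t', ht'T, ht'U, hbt'⟩ := hcov' b hb
  have hne : t ≠ t' := fun h => hbt (h ▸ hbt')
  rcases hT.2 htT ht'T hne with h | h | h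
  · exact hbt (ht.le_of_ge (Finset.mem_filter.2 ⟨ht'T, ht'U⟩) h hbt')
  · exact hbt (h hbt')
  · refine h ?_
    rw [Finset.coe_union]
    exact SimpleGraph.connected_induce_union (hT.1 t htT).2.2.preconnected
      (hT.1 t' ht'T).2.2.preconnected ha hbt' hab

lemma IsMaxTubing.isResidual_unique {T : Finset (Finset V)} (hT : IsMaxTubing G T) {U : Finset V}
    (hU : U ∈ insert Finset.univ T) (hUc : (G.induce (U : Set V)).Connected) {x y : V}
    (hx : IsResidual T U x) (hy : IsResidual T U y) : x = y := by
  by_contra hxy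
  obtain ⟨C, hC⟩ := exists_maximal_connected_induce (G := G)
    (Finset.mem_erase.2 ⟨Ne.symm hxy, hy.1⟩)
  obtain ⟨hCU, hyC, hCc⟩ := hC.prop
  have hxC : x ∉ C := fun h => Finset.notMem_erase x U (hCU h)
  have hCU' : C ⊆ U := hCU.trans (Finset.erase_subset x U)
  have hCT : C ∉ T := fun h =>
    hy.2 C h (Finset.ssubset_iff_subset_ne.2 ⟨hCU', fun h => hxC (h ▸ hx.1)⟩) hyC
  have hCtube : IsTube G C := ⟨⟨y, hyC⟩, fun h => hxC (h ▸ Finset.mem_univ x), hCc⟩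
  have hcompat : ∀ t ∈ T, TubeCompat G C t := by
    intro t ht
    by_cases hconn : (G.induce ((C ∪ t : Finset V) : Set V)).Connected
    swap
    · exact Or.inr (Or.inr hconn)
    obtain h | h : U ⊆ t ∨ t ⊆ U := by
      have hUt : (G.induce ((U ∪ t : Finset V) : Set V)).Connected := by
        have := connected_induce_finset_union hUc hconn hy.1 (Finset.mem_union_left t hyC)
        rwa [← Finset.union_assoc, Finset.union_eq_left.2 hCU'] at this
      rcases Finset.mem_insert.1 hU with rfl | hU
      · exact Or.inr (Finset.subset_univ t)
      rcases eq_or_ne U t with rfl | hne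
      · exact Or.inl subset_rfl
      rcases hT.1.2 hU ht hne with h | h | h
      · exact Or.inl h
      · exact Or.inr h
      · exact absurd hUt h
    · exact Or.inl (hCU'.trans h)
    · rcases h.eq_or_ssubset with rfl | hss
      · exact Or.inl hCU'
      refine Or.inr (Or.inl (Finset.subset_union_right.trans
        (hC.le_of_ge ⟨?_, Finset.mem_union_left t hyC, hconn⟩ Finset.subset_union_left)))
      exact Finset.union_subset hCU (Finset.subset_erase.2 ⟨h, hx.2 t ht hss⟩)
  refine hCT ?_
  rw [← hT.2 (insert C T) ⟨?_, ?_⟩ (Finset.subset_insert C T)]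
  · exact Finset.mem_insert_self C T
  · intro t ht
    rcases Finset.mem_insert.1 ht with rfl | ht
    exacts [hCtube, hT.1.1 t ht]
  · rw [Finset.coe_insert]
    refine hT.1.2.insert fun t ht _ => ⟨hcompat t ht, ?_⟩
    rcases hcompat t ht with h | h | h
    · exact Or.inr (Or.inl h)
    · exact Or.inl h
    · exact Or.inr (Or.inr (by rwa [Finset.union_comm]))

end

/-- Every inclusion-maximal tubing of a connected graph on `n` vertices has exactly
`n - 1` tubes. -/
theorem maxTubing_card {V : Type*} [Fintype V] [DecidableEq V] (G : SimpleGraph V)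
    (hG : G.Connected) (T : Finset (Finset V)) (hT : IsMaxTubing G T) :
    T.card = Fintype.card V - 1 := by
  have hconn : ∀ U ∈ insert Finset.univ T, (G.induce (U : Set V)).Connected := by
    intro U hU
    rcases Finset.mem_insert.1 hU with rfl | hU
    · rw [Finset.coe_univ]
      exact (SimpleGraph.induceUnivIso G).connected_iff.2 hG
    · exact (hT.1.1 U hU).2.2
  have huniv : Finset.univ ∉ T := fun h => (hT.1.1 _ h).2.1 rfl
  choose f hf using fun U hU => hT.1.exists_isResidual (hconn U hU)
  have hcard : (insert Finset.univ T).card = (Finset.univ : Finset V).card := by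
    refine Finset.card_bij f (fun _ _ => Finset.mem_univ _) ?_ ?_
    · have key : ∀ U (hU : U ∈ insert Finset.univ T) W (hW : W ∈ insert Finset.univ T),
          f U hU = f W hW → U ⊆ W → U = W := by
        intro U hU W hW h hUW
        by_contra hne
        have hss := Finset.ssubset_iff_subset_ne.2 ⟨hUW, hne⟩
        rcases Finset.mem_insert.1 hU with rfl | hUT
        · exact hne (Finset.univ_subset_iff.1 hUW).symm
        · exact (hf W hW).2 U hUT hss (h ▸ (hf U hU).1)
      intro U hU W hW h
      rcases hT.1.subset_or_subset hU hW (hf U hU).1 (h ▸ (hf W hW).1) with hs | hs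
      · exact key U hU W hW h hs
      · exact (key W hW U hU h.symm hs).symm
    · intro v _
      obtain ⟨U, hU⟩ := ((insert Finset.univ T).filter (v ∈ ·)).exists_minimal
        ⟨Finset.univ, by simp⟩
      obtain ⟨hUT, hvU⟩ := Finset.mem_filter.1 hU.prop
      refine ⟨U, hUT, hT.isResidual_unique hUT (hconn U hUT) (hf U hUT) ⟨hvU, ?_⟩⟩
      intro t ht htU hvt
      exact hU.not_lt (Finset.mem_filter.2 ⟨Finset.mem_insert_of_mem ht, hvt⟩) htU
  rw [Finset.card_insert_of_notMem huniv, Finset.card_univ] at hcard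
  omega
end

section
/- For every n ≥ 2, there exists a sequence of maximal tubings of the star S_n (center c, leaves l_1,...,l_{n−1}), with consecutive tubings differing by exchanging exactly one tube, such that every tube of S_n appears in the tubings of exactly one nonempty contiguous interval of the sequence. -/
/-- The star `S_n` on `n` vertices: vertex `0` is the center, adjacent to all leaves. -/
def starGraph (n : ℕ) : SimpleGraph (Fin n) :=
  SimpleGraph.fromRel fun a _ => (a : ℕ) = 0

/-- The number of steps of the facet-Hamiltonian path on the permutations of `k` letters. -/
def permPathLength : ℕ → ℕ
  | 0 => 0
  | k + 1 => 2 * permPathLength k + k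

/-- The facet-Hamiltonian path on the permutations of the letters `1, …, k`, defined recursively:
keep the new letter last and traverse the path for the other letters, move the new letter to the
front, and traverse the path backwards. `permPath k t j` consists of `0` and the first `j` letters
of the permutation at time `t`. -/
def permPath : ℕ → ℕ → ℕ → Finset ℕ
  | 0, _, _ => {0}
  | k + 1, t, j =>
    let N := permPathLength k
    let s := min (min t N) (2 * N + k - t)
    if j ≤ k - (t - N) then permPath k s j else insert (k + 1) (permPath k s (j - 1))

theorem zero_mem_permPath (k t j : ℕ) : 0 ∈ permPath k t j := by
  induction k generalizing t j with
  | zero => simp [permPath]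
  | succ k ih => simp only [permPath]; split_ifs <;> simp [ih]

theorem permPath_subset (k t j : ℕ) : permPath k t j ⊆ Finset.range (k + 1) := by
  induction k generalizing t j with
  | zero => simp [permPath]
  | succ k ih =>
    simp only [permPath]
    intro x hx
    split_ifs at hx
    · have := Finset.mem_range.1 (ih _ _ hx)
      simp; omega
    · rcases Finset.mem_insert.1 hx with rfl | hx
      · simp
      · have := Finset.mem_range.1 (ih _ _ hx)
        simp; omega

theorem succ_notMem_permPath (k t j : ℕ) : k + 1 ∉ permPath k t j := fun h => by
  simpa using permPath_subset k t j h

theorem card_permPath {k t j : ℕ} (hj : j ≤ k) : (permPath k t j).card = j + 1 := by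
  induction k generalizing t j with
  | zero => simp [permPath]; omega
  | succ k ih =>
    simp only [permPath]
    split_ifs with h
    · exact ih (by omega)
    · rw [Finset.card_insert_of_notMem (succ_notMem_permPath _ _ _), ih (by omega)]
      omega

theorem permPath_self (k t : ℕ) : permPath k t k = Finset.range (k + 1) :=
  Finset.eq_of_subset_of_card_le (permPath_subset k t k) (by simp [card_permPath])

theorem permPath_mono {k t i j : ℕ} (hij : i ≤ j) : permPath k t i ⊆ permPath k t j := by
  induction k generalizing t i j with
  | zero => simp [permPath]
  | succ k ih =>
    simp only [permPath]
    split_ifs with h h'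
    · exact ih hij
    · exact (ih (by omega)).trans (Finset.subset_insert _ _)
    · omega
    · exact Finset.insert_subset_insert _ (ih (by omega))

theorem permPath_zero {k j : ℕ} (hj : j ≤ k) : permPath k 0 j = Finset.range (j + 1) := by
  induction k generalizing j with
  | zero => obtain rfl : j = 0 := by omega
            simp [permPath]
  | succ k ih =>
    simp only [permPath]
    split_ifs with h
    · simpa using ih (by omega)
    · obtain rfl : j = k + 1 := by omega
      simp [ih, Finset.range_add_one]

theorem permPath_index_zero (k t : ℕ) : permPath k t 0 = {0} :=
  (Finset.eq_of_subset_of_card_le (by simpa using zero_mem_permPath k t 0)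
    (by simp [card_permPath])).symm

theorem exists_unique_permPath_ne {k t : ℕ} (ht : t < permPathLength k) :
    ∃ j < k, ∀ i ≤ k, permPath k t i ≠ permPath k (t + 1) i ↔ i = j := by
  induction k generalizing t with
  | zero => simp [permPathLength] at ht
  | succ k ih =>
    simp only [permPathLength] at ht
    simp only [permPath]
    set N := permPathLength k with hN
    have insert_inj {s s' i : ℕ} : insert (k + 1) (permPath k s i) =
        insert (k + 1) (permPath k s' i) ↔ permPath k s i = permPath k s' i := by
      refine ⟨fun h => ?_, fun h => by rw [h]⟩
      rw [← Finset.erase_insert (succ_notMem_permPath k s i), h,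
        Finset.erase_insert (succ_notMem_permPath k s' i)]
    rcases lt_or_ge t N with h1 | h1
    · obtain ⟨j, hj, h⟩ := ih h1
      refine ⟨j, by omega, fun i hi => ?_⟩
      rw [show min (min t N) (2 * N + k - t) = t by omega,
        show min (min (t + 1) N) (2 * N + k - (t + 1)) = t + 1 by omega,
        show k - (t - N) = k by omega, show k - (t + 1 - N) = k by omega]
      split_ifs with hik
      · exact h i hik
      · obtain rfl : i = k + 1 := by omega
        simp only [Nat.add_sub_cancel, permPath_self]
        simp; omega
    rcases lt_or_ge t (N + k) with h2 | h2
    · refine ⟨k - (t - N), by omega, fun i hi => ?_⟩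
      rw [show min (min t N) (2 * N + k - t) = N by omega,
        show min (min (t + 1) N) (2 * N + k - (t + 1)) = N by omega]
      split_ifs with h3 h4 h4
      · simp; omega
      · refine iff_of_true (fun h => succ_notMem_permPath k N i ?_) (by omega)
        rw [h]; simp
      · omega
      · simp; omega
    · obtain ⟨j, hj, h⟩ := ih (t := 2 * N + k - (t + 1)) (by omega)
      refine ⟨j + 1, by omega, fun i hi => ?_⟩
      rw [show min (min t N) (2 * N + k - t) = 2 * N + k - (t + 1) + 1 by omega,
        show min (min (t + 1) N) (2 * N + k - (t + 1)) = 2 * N + k - (t + 1) by omega,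
        show k - (t - N) = 0 by omega, show k - (t + 1 - N) = 0 by omega]
      split_ifs with hi0
      · rw [ne_comm, h i (by omega)]
        obtain rfl : i = 0 := by omega
        have h0 := (permPath_index_zero k (2 * N + k - (t + 1))).trans
          (permPath_index_zero k (2 * N + k - (t + 1) + 1)).symm
        have := (h 0 (by omega)).not.1 (not_not.2 h0)
        omega
      · rw [ne_comm, Ne, insert_inj, ← Ne, h (i - 1) (by omega)]
        omega

theorem min_min_cases (t N k : ℕ) :
    (t ≤ N ∧ min (min t N) (2 * N + k - t) = t) ∨
    (N ≤ t ∧ t ≤ N + k ∧ min (min t N) (2 * N + k - t) = N) ∨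
    (N + k ≤ t ∧ min (min t N) (2 * N + k - t) = 2 * N + k - t) := by
  omega

theorem exists_interval_permPath {k : ℕ} {S : Finset ℕ} (h0 : 0 ∈ S)
    (hS : S ⊆ Finset.range (k + 1)) :
    ∃ a b : ℕ, a ≤ b ∧ b ≤ permPathLength k ∧ ∀ t ≤ permPathLength k,
      permPath k t (S.card - 1) = S ↔ a ≤ t ∧ t ≤ b := by
  induction k generalizing S with
  | zero =>
    obtain rfl : S = {0} := Finset.Subset.antisymm (by simpa using hS) (by simpa using h0)
    exact ⟨0, 0, le_rfl, le_rfl, by simp [permPath, permPathLength]⟩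
  | succ k ih =>
    have hpos : 0 < S.card := Finset.card_pos.2 ⟨0, h0⟩
    by_cases hbot : S.card = 1
    · refine ⟨0, permPathLength (k + 1), by omega, le_rfl, fun t ht => iff_of_true ?_ (by omega)⟩
      rw [hbot, Nat.sub_self, permPath_index_zero]
      exact Finset.eq_of_subset_of_card_le (by simpa using h0) (by simp [hbot])
    by_cases htop : S.card = k + 2
    · refine ⟨0, permPathLength (k + 1), by omega, le_rfl, fun t ht => iff_of_true ?_ (by omega)⟩
      rw [htop, show k + 2 - 1 = k + 1 by omega, permPath_self]
      exact (Finset.eq_of_subset_of_card_le hS (by simp [htop])).symm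
    simp only [permPathLength, permPath]
    by_cases hk : k + 1 ∈ S
    · have hcard := Finset.card_erase_of_mem hk
      have h0' : 0 ∈ S.erase (k + 1) := by simp [h0]
      have hpos' : 0 < (S.erase (k + 1)).card := Finset.card_pos.2 ⟨0, h0'⟩
      have hle := Finset.card_le_card hS
      rw [Finset.card_range] at hle
      obtain ⟨a, b, hab, hb, h⟩ := ih h0' (fun x hx => by
        have := Finset.mem_range.1 (hS (Finset.mem_of_mem_erase hx))
        have := Finset.ne_of_mem_erase hx
        simp; omega)
      set N := permPathLength k with hN
      have key (t : ℕ) (p : ℕ) (s : ℕ) (hs : s ≤ N) :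
          (if S.card - 1 ≤ p then permPath k s (S.card - 1) else
            insert (k + 1) (permPath k s (S.card - 1 - 1))) = S ↔
          p < S.card - 1 ∧ a ≤ s ∧ s ≤ b := by
        rw [← h s hs, hcard]
        split_ifs with hp
        · refine iff_of_false (fun h' => succ_notMem_permPath k s (S.card - 1) ?_) (by omega)
          rwa [h']
        · rw [← Finset.erase_eq_iff_eq_insert hk (succ_notMem_permPath _ _ _) |>.trans eq_comm,
            eq_comm]
          simp [not_le.1 hp]
      by_cases hbN : b = N
      · refine ⟨N + k + 2 - S.card, 2 * N + k - a, by omega, by omega, fun t ht => ?_⟩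
        rw [key t _ _ (by omega)]
        have hs := min_min_cases t N k
        generalize min (min t N) (2 * N + k - t) = s at hs ⊢
        omega
      · refine ⟨2 * N + k - b, 2 * N + k - a, by omega, by omega, fun t ht => ?_⟩
        rw [key t _ _ (by omega)]
        have hs := min_min_cases t N k
        generalize min (min t N) (2 * N + k - t) = s at hs ⊢
        omega
    · have hS' : S ⊆ Finset.range (k + 1) := fun x hx => by
        have := Finset.mem_range.1 (hS hx)
        have : x ≠ k + 1 := by rintro rfl; exact hk hx
        simp; omega
      have hle := Finset.card_le_card hS'
      rw [Finset.card_range] at hle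
      obtain ⟨a, b, hab, hb, h⟩ := ih h0 hS'
      set N := permPathLength k with hN
      have key (t : ℕ) (p : ℕ) (s : ℕ) (hs : s ≤ N) :
          (if S.card - 1 ≤ p then permPath k s (S.card - 1) else
            insert (k + 1) (permPath k s (S.card - 1 - 1))) = S ↔
          S.card - 1 ≤ p ∧ a ≤ s ∧ s ≤ b := by
        rw [← h s hs]
        split_ifs with hp
        · simp [hp]
        · refine iff_of_false (fun h' => hk ?_) (by omega)
          rw [← h']; simp
      by_cases hbN : b = N
      · refine ⟨a, N + k + 1 - S.card, by omega, by omega, fun t ht => ?_⟩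
        rw [key t _ _ (by omega)]
        have hs := min_min_cases t N k
        generalize min (min t N) (2 * N + k - t) = s at hs ⊢
        omega
      · refine ⟨a, b, by omega, by omega, fun t ht => ?_⟩
        rw [key t _ _ (by omega)]
        have hs := min_min_cases t N k
        generalize min (min t N) (2 * N + k - t) = s at hs ⊢
        omega

theorem starGraph_adj {n : ℕ} {a b : Fin n} :
    (starGraph n).Adj a b ↔ a ≠ b ∧ ((a : ℕ) = 0 ∨ (b : ℕ) = 0) := by
  simp [starGraph, SimpleGraph.fromRel_adj]

theorem connected_induce_starGraph_of_zero_mem {k : ℕ} {s : Finset (Fin (k + 1))} (h : 0 ∈ s) :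
    ((starGraph (k + 1)).induce (s : Set (Fin (k + 1)))).Connected := by
  rw [SimpleGraph.connected_iff_exists_forall_reachable]
  refine ⟨⟨0, h⟩, fun ⟨v, hv⟩ => ?_⟩
  by_cases hv0 : v = 0
  · subst hv0; rfl
  · refine SimpleGraph.Adj.reachable ?_
    simp [starGraph_adj, Ne.symm hv0]

theorem eq_of_connected_induce_starGraph {k : ℕ} {s : Finset (Fin (k + 1))}
    (hs : ((starGraph (k + 1)).induce (s : Set (Fin (k + 1)))).Connected) (h : 0 ∉ s)
    {a b : Fin (k + 1)} (ha : a ∈ s) (hb : b ∈ s) : a = b := by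
  by_contra hab
  obtain ⟨w⟩ := hs.preconnected ⟨a, ha⟩ ⟨b, hb⟩
  cases w with
  | nil => exact hab rfl
  | @cons _ x _ hax _ =>
    rw [SimpleGraph.induce_adj, starGraph_adj] at hax
    obtain ⟨-, h0 | h0⟩ := hax
    · exact h (by rwa [show a = 0 from Fin.ext h0] at ha)
    · exact h (by simpa [show x.1 = 0 from Fin.ext h0] using x.2)

theorem isTube_of_zero_mem {k : ℕ} {s : Finset (Fin (k + 1))} (h : 0 ∈ s)
    (hs : s ≠ Finset.univ) : IsTube (starGraph (k + 1)) s :=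
  ⟨⟨0, h⟩, hs, connected_induce_starGraph_of_zero_mem h⟩

theorem isTube_singleton {k : ℕ} {v : Fin (k + 1)} (h : v ≠ 0) :
    IsTube (starGraph (k + 1)) {v} := by
  refine ⟨Finset.singleton_nonempty v, fun h' => h ?_, ?_⟩
  · exact (Finset.mem_singleton.1 (h' ▸ Finset.mem_univ (0 : Fin (k + 1)))).symm
  · rw [SimpleGraph.connected_iff_exists_forall_reachable]
    refine ⟨⟨v, by simp⟩, fun ⟨w, hw⟩ => ?_⟩
    obtain rfl : w = v := by simpa using hw
    rfl

theorem IsTube.eq_singleton {k : ℕ} {s : Finset (Fin (k + 1))}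
    (hs : IsTube (starGraph (k + 1)) s) (h : 0 ∉ s) : ∃ v, v ≠ 0 ∧ s = {v} := by
  obtain ⟨⟨v, hv⟩, -, hc⟩ := hs
  refine ⟨v, by rintro rfl; exact h hv, Finset.eq_singleton_iff_unique_mem.2 ⟨hv, fun w hw => ?_⟩⟩
  exact eq_of_connected_induce_starGraph hc h hw hv

theorem TubeCompat.comparable {k : ℕ} {s t : Finset (Fin (k + 1))}
    (h : TubeCompat (starGraph (k + 1)) s t) (h0 : 0 ∈ s ∨ 0 ∈ t) : s ⊆ t ∨ t ⊆ s := by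
  rcases h with h | h | h
  · exact .inl h
  · exact .inr h
  · exact (h (connected_induce_starGraph_of_zero_mem (by simpa using h0))).elim

/-- The set `permPath k t i` as a set of vertices of the star. -/
def permTube (k t i : ℕ) : Finset (Fin (k + 1)) :=
  Finset.univ.filter fun v => (v : ℕ) ∈ permPath k t i

@[simp]
theorem mem_permTube {k t i : ℕ} {v : Fin (k + 1)} :
    v ∈ permTube k t i ↔ (v : ℕ) ∈ permPath k t i := by
  simp [permTube]

theorem map_permTube (k t i : ℕ) :
    (permTube k t i).map Fin.valEmbedding = permPath k t i := by
  ext x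
  simp only [Finset.mem_map, mem_permTube, Fin.valEmbedding_apply]
  exact ⟨fun ⟨v, hv, hvx⟩ => hvx ▸ hv,
    fun hx => ⟨⟨x, Finset.mem_range.1 (permPath_subset _ _ _ hx)⟩, hx, rfl⟩⟩

/-- The tubes of the facet-Hamiltonian path of the stellohedron: at time `t ≤ k` the tubing consists
of the leaves `1, …, k - t` and of initial segments; from time `k` on it follows `permPath`. -/
def pathTube (k t i : ℕ) : Finset (Fin (k + 1)) :=
  if i < k - t then Finset.univ.filter fun v => (v : ℕ) = i + 1 else permTube k (t - k) i

/-- The facet-Hamiltonian path of the stellohedron. -/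
def pathTubing (k t : ℕ) : Finset (Finset (Fin (k + 1))) :=
  (Finset.range k).image (pathTube k t)

theorem pathTube_of_lt {k t i : ℕ} (hi : i < k - t) :
    pathTube k t i = {⟨i + 1, by omega⟩} := by
  ext v; simp [pathTube, hi, Fin.ext_iff]

theorem pathTube_of_le {k t i : ℕ} (hi : k - t ≤ i) :
    pathTube k t i = permTube k (t - k) i := by
  simp [pathTube, not_lt.2 hi]

theorem zero_mem_pathTube {k t i : ℕ} : 0 ∈ pathTube k t i ↔ k - t ≤ i := by
  rcases lt_or_ge i (k - t) with hi | hi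
  · simp [pathTube_of_lt hi, Fin.ext_iff]; omega
  · simp [pathTube_of_le hi, hi, zero_mem_permPath]

theorem card_permTube {k t i : ℕ} (hi : i ≤ k) : (permTube k t i).card = i + 1 := by
  rw [← Finset.card_map Fin.valEmbedding, map_permTube, card_permPath hi]

theorem eq_of_pathTube_eq {k t s i j : ℕ} (hi : i ≤ k) (hj : j ≤ k)
    (h : pathTube k t i = pathTube k s j) : i = j := by
  have h0 := congrArg (fun u => (0 : Fin (k + 1)) ∈ u) h
  simp only [zero_mem_pathTube, eq_iff_iff] at h0
  rcases lt_or_ge i (k - t) with h1 | h1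
  · rw [pathTube_of_lt h1, pathTube_of_lt (by omega)] at h
    simpa using h
  · rw [pathTube_of_le h1, pathTube_of_le (h0.1 h1)] at h
    have := congrArg Finset.card h
    rw [card_permTube hi, card_permTube hj] at this
    omega

theorem permTube_inj {k t s i j : ℕ} :
    permTube k t i = permTube k s j ↔ permPath k t i = permPath k s j := by
  rw [← Finset.map_inj (f := Fin.valEmbedding), map_permTube, map_permTube]

theorem exists_unique_pathTube_ne {k t : ℕ} (ht : t < permPathLength k + k) :
    ∃ j < k, ∀ i < k, pathTube k t i ≠ pathTube k (t + 1) i ↔ i = j := by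
  rcases lt_or_ge t k with h | h
  · refine ⟨k - t - 1, by omega, fun i hi => ?_⟩
    by_cases hit : i = k - t - 1
    · refine iff_of_true (fun h' => ?_) hit
      have h0 := congrArg (fun u => (0 : Fin (k + 1)) ∈ u) h'
      simp only [zero_mem_pathTube, eq_iff_iff] at h0
      omega
    · refine iff_of_false (not_not.2 ?_) hit
      have : i < k - t ↔ i < k - (t + 1) := by omega
      simp only [pathTube, this, show t - k = 0 by omega, show t + 1 - k = 0 by omega]
  · obtain ⟨j, hj, hji⟩ := exists_unique_permPath_ne (k := k) (t := t - k) (by omega)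
    refine ⟨j, hj, fun i hi => ?_⟩
    rw [pathTube_of_le (by omega), pathTube_of_le (by omega), Ne, permTube_inj, ← hji i hi.le,
      show t + 1 - k = t - k + 1 by omega]

theorem card_image_sdiff_image_eq_one {α : Type*} [DecidableEq α] {k j : ℕ} {f g : ℕ → α}
    (hfg : ∀ i < k, ∀ i' < k, f i = g i' → i = i') (hj : j < k)
    (h : ∀ i < k, f i ≠ g i ↔ i = j) :
    ((Finset.range k).image f \ (Finset.range k).image g).card = 1 := by
  rw [Finset.card_eq_one]
  refine ⟨f j, ?_⟩
  ext x
  simp only [Finset.mem_sdiff, Finset.mem_image, Finset.mem_range, Finset.mem_singleton]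
  constructor
  · rintro ⟨⟨i, hi, rfl⟩, hx⟩
    rw [(h i hi).1 fun h' => hx ⟨i, hi, h'.symm⟩]
  · rintro rfl
    refine ⟨⟨j, hj, rfl⟩, fun ⟨i, hi, hij⟩ => ?_⟩
    obtain rfl := hfg j hj i hi hij.symm
    exact (h _ hj).2 rfl hij.symm

theorem singleton_mem_pathTubing {k t : ℕ} {v : Fin (k + 1)} (hv : v ≠ 0) :
    {v} ∈ pathTubing k t ↔ (v : ℕ) ≤ k - t := by
  have hv' : (v : ℕ) ≠ 0 := fun h => hv (Fin.ext h)
  simp only [pathTubing, Finset.mem_image, Finset.mem_range]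
  constructor
  · rintro ⟨i, hi, h⟩
    have hit : i < k - t := by
      by_contra hit
      have := zero_mem_pathTube.2 (not_lt.1 hit)
      rw [h, Finset.mem_singleton] at this
      exact hv this.symm
    rw [pathTube_of_lt hit, Finset.singleton_inj] at h
    rw [← h]; simp; omega
  · intro h
    refine ⟨v - 1, by omega, ?_⟩
    rw [pathTube_of_lt (by omega), Finset.singleton_inj]
    ext; simp; omega

theorem mem_pathTubing_of_zero_mem {k t : ℕ} {u : Finset (Fin (k + 1))} (h0 : 0 ∈ u)
    (hu : u ≠ Finset.univ) : u ∈ pathTubing k t ↔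
      k - t ≤ u.card - 1 ∧
        permPath k (t - k) ((u.map Fin.valEmbedding).card - 1) = u.map Fin.valEmbedding := by
  have hcard : u.card < k + 1 := by
    simpa using Finset.card_lt_card (Finset.ssubset_univ_iff.2 hu)
  have hpos : 0 < u.card := Finset.card_pos.2 ⟨0, h0⟩
  simp only [pathTubing, Finset.mem_image, Finset.mem_range, Finset.card_map]
  constructor
  · rintro ⟨i, hi, rfl⟩
    have hit := zero_mem_pathTube.1 h0
    rw [pathTube_of_le hit, card_permTube hi.le, map_permTube]
    exact ⟨by omega, by simp⟩
  · rintro ⟨h1, h2⟩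
    refine ⟨u.card - 1, by omega, ?_⟩
    rw [pathTube_of_le h1, ← Finset.map_inj (f := Fin.valEmbedding), map_permTube, h2]

theorem permTube_ne_univ {k t i : ℕ} (hi : i < k) :
    permTube k t i ≠ Finset.univ := fun h => by
  have := congrArg Finset.card h
  rw [card_permTube hi.le] at this
  simp at this; omega

theorem isTubing_pathTubing (k t : ℕ) : IsTubing (starGraph (k + 1)) (pathTubing k t) := by
  constructor
  · intro u hu
    simp only [pathTubing, Finset.mem_image, Finset.mem_range] at hu
    obtain ⟨i, hi, rfl⟩ := hu
    rcases lt_or_ge i (k - t) with h | h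
    · rw [pathTube_of_lt h]
      exact isTube_singleton (by simp [Fin.ext_iff])
    · refine isTube_of_zero_mem (zero_mem_pathTube.2 h) ?_
      rw [pathTube_of_le h]
      exact permTube_ne_univ hi
  · intro u hu w hw huw
    simp only [pathTubing, Finset.coe_image, Set.mem_image, Finset.coe_range, Set.mem_Iio] at hu hw
    obtain ⟨i, hi, rfl⟩ := hu
    obtain ⟨j, hj, rfl⟩ := hw
    have leaf_sub {i j : ℕ} (hi : i < k - t) (hj : k - t ≤ j) (hjk : j < k) :
        pathTube k t i ⊆ pathTube k t j := by
      rw [pathTube_of_lt hi, pathTube_of_le hj, Finset.singleton_subset_iff, mem_permTube,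
        show t - k = 0 by omega, permPath_zero hjk.le]
      simp; omega
    have seg_sub {i j : ℕ} (hi : k - t ≤ i) (hij : i ≤ j) :
        pathTube k t i ⊆ pathTube k t j := by
      rw [pathTube_of_le hi, pathTube_of_le (by omega)]
      intro v
      simpa using @permPath_mono k (t - k) i j hij v
    rcases lt_or_ge i (k - t) with h | h <;> rcases lt_or_ge j (k - t) with h' | h'
    · refine .inr (.inr fun hc => huw ?_)
      rw [pathTube_of_lt h, pathTube_of_lt h'] at hc ⊢
      rw [eq_of_connected_induce_starGraph hc (by simp [Fin.ext_iff])
        (a := ⟨i + 1, by omega⟩) (b := ⟨j + 1, by omega⟩) (by simp) (by simp)]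
    · exact .inl (leaf_sub h h' hj)
    · exact .inr (.inl (leaf_sub h' h hi))
    · rcases le_total i j with hij | hij
      · exact .inl (seg_sub h hij)
      · exact .inr (.inl (seg_sub h' hij))

theorem isMaxTubing_pathTubing (k t : ℕ) : IsMaxTubing (starGraph (k + 1)) (pathTubing k t) := by
  refine ⟨isTubing_pathTubing k t, fun T' hT' hsub => Finset.Subset.antisymm (fun u hu => ?_) hsub⟩
  have hmem {i : ℕ} (hi : i < k) : pathTube k t i ∈ T' :=
    hsub (Finset.mem_image_of_mem _ (Finset.mem_range.2 hi))
  have hcomp {i : ℕ} (hi : i < k) (h0 : 0 ∈ u ∨ 0 ∈ pathTube k t i) :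
      u ⊆ pathTube k t i ∨ pathTube k t i ⊆ u := by
    by_cases h : u = pathTube k t i
    · exact .inl h.le
    · exact (hT'.2 hu (hmem hi) h).comparable h0
  by_cases h0 : 0 ∈ u
  · have huniv := (hT'.1 u hu).2.1
    have hlt : u.card < k + 1 := by
      simpa using Finset.card_lt_card (Finset.ssubset_univ_iff.2 huniv)
    have hpos : 0 < u.card := Finset.card_pos.2 ⟨0, h0⟩
    have hleaf (i : ℕ) (hi : i < k - t) : (⟨i + 1, by omega⟩ : Fin (k + 1)) ∈ u := by
      rcases hcomp (i := i) (by omega) (.inl h0) with h | h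
      · have := h h0
        rw [zero_mem_pathTube] at this
        omega
      · rwa [pathTube_of_lt hi, Finset.singleton_subset_iff] at h
    have hcard : k - t ≤ u.card - 1 := by
      have hsub' : permTube k 0 (k - t) ⊆ u := by
        intro v hv
        rw [mem_permTube, permPath_zero (Nat.sub_le k t), Finset.mem_range] at hv
        by_cases hv0 : v = 0
        · rwa [hv0]
        · have hv' : (v : ℕ) ≠ 0 := fun h => hv0 (Fin.ext h)
          convert hleaf (v - 1) (by omega) using 1
          ext; simp; omega
      have := Finset.card_le_card hsub'
      rw [card_permTube (Nat.sub_le k t)] at this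
      omega
    have hc : (pathTube k t (u.card - 1)).card = u.card := by
      rw [pathTube_of_le hcard, card_permTube (by omega)]
      omega
    have heq : u = pathTube k t (u.card - 1) := by
      rcases hcomp (i := u.card - 1) (by omega) (.inl h0) with h | h
      · exact Finset.eq_of_subset_of_card_le h hc.le
      · exact (Finset.eq_of_subset_of_card_le h hc.ge).symm
    rw [heq]
    exact Finset.mem_image_of_mem _ (Finset.mem_range.2 (by omega))
  · obtain ⟨v, hv, rfl⟩ := (hT'.1 u hu).eq_singleton h0
    rw [singleton_mem_pathTubing hv]
    by_contra hvt
    have hvk := v.is_lt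
    have hz : 0 ∈ pathTube k t (k - t) := zero_mem_pathTube.2 le_rfl
    rcases hcomp (i := k - t) (by omega) (.inr hz) with h | h
    · rw [pathTube_of_le le_rfl, Finset.singleton_subset_iff, mem_permTube] at h
      rcases le_total t k with htk | htk
      · rw [show t - k = 0 by omega, permPath_zero (Nat.sub_le k t), Finset.mem_range] at h
        omega
      · rw [show k - t = 0 by omega, permPath_index_zero, Finset.mem_singleton] at h
        exact hv (Fin.ext h)
    · exact h0 (h hz)

/-- The stellohedron has a facet-Hamiltonian path: for `n ≥ 2` there is a sequence of
maximal tubings of the star `S_n`, consecutive ones differing by exchanging exactly one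
tube, such that every tube of `S_n` appears in the tubings of exactly one nonempty
contiguous interval of the sequence. -/
theorem stellohedron_facet_hamiltonian_path (n : ℕ) (hn : 2 ≤ n) :
    ∃ (m : ℕ) (T : Fin m → Finset (Finset (Fin n))),
      1 ≤ m ∧
      (∀ j, IsMaxTubing (starGraph n) (T j)) ∧
      (∀ (j : Fin m) (hj : (j : ℕ) + 1 < m),
        ((T j) \ (T ⟨(j : ℕ) + 1, hj⟩)).card = 1 ∧
        ((T ⟨(j : ℕ) + 1, hj⟩) \ (T j)).card = 1) ∧
      (∀ t : Finset (Fin n), IsTube (starGraph n) t →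
        ∃ a b : ℕ, a ≤ b ∧ b < m ∧
          ∀ j : Fin m, t ∈ T j ↔ (a ≤ (j : ℕ) ∧ (j : ℕ) ≤ b)) := by
  obtain ⟨k, rfl⟩ : ∃ k, n = k + 1 := ⟨n - 1, by omega⟩
  refine ⟨permPathLength k + k + 1, fun t => pathTubing k t, by omega,
    fun t => isMaxTubing_pathTubing k t, fun t ht => ?_, fun u hu => ?_⟩
  · obtain ⟨j, hj, h⟩ := exists_unique_pathTube_ne (k := k) (t := t) (by omega)
    exact ⟨card_image_sdiff_image_eq_one
        (fun i hi i' hi' => eq_of_pathTube_eq hi.le hi'.le) hj h,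
      card_image_sdiff_image_eq_one
        (fun i hi i' hi' => eq_of_pathTube_eq hi.le hi'.le) hj
        fun i hi => ne_comm.trans (h i hi)⟩
  · by_cases h0 : 0 ∈ u
    · have hpos : 0 < u.card := Finset.card_pos.2 ⟨0, h0⟩
      have hlt : u.card < k + 1 := by
        simpa using Finset.card_lt_card (Finset.ssubset_univ_iff.2 hu.2.1)
      obtain ⟨a, b, hab, hb, h⟩ := exists_interval_permPath (k := k) (S := u.map Fin.valEmbedding)
        (by simpa using h0) (fun x hx => by
          obtain ⟨v, -, rfl⟩ := Finset.mem_map.1 hx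
          simpa using v.is_lt)
      have key (t : Fin (permPathLength k + k + 1)) :=
        (mem_pathTubing_of_zero_mem (k := k) (t := t) h0 hu.2.1).trans
          (and_congr_right fun _ => h (t - k) (by omega))
      by_cases ha : a = 0
      · refine ⟨k - (u.card - 1), k + b, by omega, by omega, fun t => (key t).trans ?_⟩
        omega
      · refine ⟨k + a, k + b, by omega, by omega, fun t => (key t).trans ?_⟩
        omega
    · obtain ⟨v, hv, rfl⟩ := hu.eq_singleton h0
      have hvk := v.is_lt
      have hv' : (v : ℕ) ≠ 0 := fun h => hv (Fin.ext h)
      refine ⟨0, k - v, by omega, by omega, fun t => (singleton_mem_pathTubing hv).trans ?_⟩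
      omega
end
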